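/- Let (σ₁^α, σ₂^α) satisfy the cut-off conditions with constant E₀ > 0, let φ : [0,∞) → ℝ be continuous, and define f^α(x,v) := σ₁^α(½ m_α |v|² + α e φ(|x|)) σ₂^α(P^α(x,v)). Then for every x ∈ ℝ² and α ∈ {−1,+1}, ∫_{ℝ²} f^α(x,v) dv = g^α(|x|, φ(|x|)), where g^α is the associated density kernel. In particular the induced spatial density depends only on |x|. -/

import Mathlib

/-!
In polar coordinates `v = s (cos t, sin t)` the kinetic energy depends on `s` alone, and if `a` is
the polar angle of `x` then `x · v⊥ = |x| s sin (t - a)`; by periodicity the shift by `a` disappears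
from the angular integral. This is `integral_polar`, where Fubini applies because the integrand is
continuous and vanishes for large `s`. The substitution `E = m s² / 2 + u`, `dE = m s ds`, with
`u = α e φ(|x|)`, then turns the radial integral into an integral over the energies between `u` and
`E₀` (`radial_substitution`). When `u ≥ E₀` the density vanishes identically because `σ₁` is always
evaluated above the cut-off.
-/

open Real MeasureTheory Set Filter

noncomputable section

/-- The rotation `v ↦ v⊥ = (v₂, -v₁)` on `ℝ²`. -/
def vperp (v : ℝ × ℝ) : ℝ × ℝ := (v.2, -v.1)

/-- The squared Euclidean norm on `ℝ²`. -/
def sqnorm (x : ℝ × ℝ) : ℝ := x.1 ^ 2 + x.2 ^ 2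

/-- The Euclidean norm on `ℝ²`. -/
def rnorm (x : ℝ × ℝ) : ℝ := Real.sqrt (x.1 ^ 2 + x.2 ^ 2)

/-- The Euclidean dot product on `ℝ²`. -/
def rdot (x y : ℝ × ℝ) : ℝ := x.1 * y.1 + x.2 * y.2

/-- The density kernel
`g^α(r,φ) = (1/m_α) ∫_{αeφ}^{E₀} σ₁(E) ∫₀^{2π} σ₂(½r² + α(c m_α/(eβ)) r √(2(E−αeφ)/m_α) sin θ) dθ dE`
for `r ≥ 0` and `αeφ < E₀`, and `g^α(r,φ) = 0` otherwise. -/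
def gker (e c β E₀ α mα : ℝ) (σ₁ σ₂ : ℝ → ℝ) (r φv : ℝ) : ℝ :=
  if 0 ≤ r ∧ α * e * φv < E₀ then
    (1 / mα) * ∫ E in (α * e * φv)..E₀, σ₁ E *
      ∫ θ in (0:ℝ)..(2 * π),
        σ₂ ((1/2) * r ^ 2
          + α * (c * mα / (e * β)) * r * Real.sqrt (2 * (E - α * e * φv) / mα) * Real.sin θ)
  else 0

/-- The angular integral of `σ₂` in the density, at base value `A` and amplitude `b`. -/
def angularIntegral (σ₂ : ℝ → ℝ) (A b : ℝ) : ℝ :=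
  ∫ θ in (0:ℝ)..(2 * π), σ₂ (A + b * Real.sin θ)

lemma continuous_angularIntegral {σ₂ : ℝ → ℝ} (h : Continuous σ₂) (A : ℝ) :
    Continuous (angularIntegral σ₂ A) := by
  unfold angularIntegral
  apply intervalIntegral.continuous_parametric_intervalIntegral_of_continuous'
  fun_prop

/-- The angular integral does not see a rotation of the angle. -/
lemma integral_shifted_sin (σ₂ : ℝ → ℝ) (A b a : ℝ) :
    ∫ t in Ioo (-π) π, σ₂ (A + b * Real.sin (t - a)) = angularIntegral σ₂ A b := by
  rw [← integral_Ioc_eq_integral_Ioo,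
    ← intervalIntegral.integral_of_le (by linarith [Real.pi_pos]),
    intervalIntegral.integral_comp_sub_right (fun t => σ₂ (A + b * Real.sin t))]
  have hp : Function.Periodic (fun t => σ₂ (A + b * Real.sin t)) (2 * π) := fun t => by
    simp only [Real.sin_add_two_pi]
  have := hp.intervalIntegral_add_eq (-π - a) 0
  rw [zero_add] at this
  rw [angularIntegral, ← this]
  congr 1
  ring

/-- With `x = |x| (cos a, sin a)`, the pairing `x · v⊥` is `|x| |v|` times the sine of the angle
from `x` to `v`. -/
lemma exists_rdot_vperp_polar (x : ℝ × ℝ) :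
    ∃ a : ℝ, ∀ s t : ℝ,
      rdot x (vperp (s * Real.cos t, s * Real.sin t)) = rnorm x * s * Real.sin (t - a) := by
  set z : ℂ := ⟨x.1, x.2⟩ with hz
  have hn : ‖z‖ = rnorm x := by
    rw [Complex.norm_def, Complex.normSq_apply, rnorm, hz]
    congr 1
    ring
  refine ⟨z.arg, fun s t => ?_⟩
  have h1 : rnorm x * Real.cos z.arg = x.1 := by rw [← hn]; exact Complex.norm_mul_cos_arg z
  have h2 : rnorm x * Real.sin z.arg = x.2 := by rw [← hn]; exact Complex.norm_mul_sin_arg z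
  simp only [rdot, vperp, Real.sin_sub]
  linear_combination (-(s * Real.sin t)) * h1 + (s * Real.cos t) * h2

/-- Polar coordinates for a density whose energy factor `h s`, a function of `s = |v|`, vanishes
for `s > R`. -/
lemma integral_polar {h σ₂ : ℝ → ℝ} (hh : Continuous h) (h₂ : Continuous σ₂) {R : ℝ} (hR : 0 ≤ R)
    (hvan : ∀ s, R < s → h s = 0) (A k : ℝ) (x : ℝ × ℝ) :
    ∫ v : ℝ × ℝ, h (rnorm v) * σ₂ (A + k * rdot x (vperp v))
      = ∫ s in (0:ℝ)..R, s * (h s * angularIntegral σ₂ A (k * rnorm x * s)) := by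
  obtain ⟨a, ha⟩ := exists_rdot_vperp_polar x
  set G : ℝ × ℝ → ℝ := fun p => p.1 * (h p.1 * σ₂ (A + k * rnorm x * p.1 * Real.sin (p.2 - a)))
    with hG
  have hGc : Continuous G := by fun_prop
  have hmeas : MeasurableSet (Ioi (0:ℝ) ×ˢ Ioo (-π) π) := measurableSet_Ioi.prod measurableSet_Ioo
  have hint : IntegrableOn G (Ioi (0:ℝ) ×ˢ Ioo (-π) π) (volume.prod volume) := by
    have hc : IntegrableOn G (Icc (0:ℝ) R ×ˢ Icc (-π) π) (volume.prod volume) :=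
      hGc.continuousOn.integrableOn_compact (isCompact_Icc.prod isCompact_Icc)
    refine IntegrableOn.of_forall_sdiff_eq_zero hc hmeas ?_
    rintro ⟨s, t⟩ ⟨⟨hs, ht⟩, hn⟩
    have : R < s := by
      by_contra hle
      exact hn ⟨⟨le_of_lt hs, not_lt.mp hle⟩, Ioo_subset_Icc_self ht⟩
    simp [hG, hvan s this]
  calc ∫ v : ℝ × ℝ, h (rnorm v) * σ₂ (A + k * rdot x (vperp v))
      = ∫ p in Ioi (0:ℝ) ×ˢ Ioo (-π) π, G p := by
        rw [← integral_comp_polarCoord_symm]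
        refine setIntegral_congr_fun hmeas ?_
        rintro ⟨s, t⟩ ⟨hs, -⟩
        have hs : 0 < s := hs
        have hr : rnorm (s * Real.cos t, s * Real.sin t) = s := by
          rw [rnorm, Real.sqrt_eq_iff_mul_self_eq (by positivity) hs.le]
          linear_combination (s ^ 2) * Real.sin_sq_add_cos_sq t
        simp only [polarCoord_symm_apply, smul_eq_mul, hG, hr, ha]
        ring_nf
    _ = ∫ s in Ioi (0:ℝ), s * (h s * angularIntegral σ₂ A (k * rnorm x * s)) := by
        rw [Measure.volume_eq_prod, setIntegral_prod G hint]
        refine setIntegral_congr_fun measurableSet_Ioi fun s _ => ?_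
        simp only [hG]
        rw [integral_const_mul, integral_const_mul, integral_shifted_sin]
    _ = ∫ s in (0:ℝ)..R, s * (h s * angularIntegral σ₂ A (k * rnorm x * s)) := by
        rw [intervalIntegral.integral_of_le hR]
        refine setIntegral_eq_of_subset_of_forall_sdiff_eq_zero measurableSet_Ioi
          Ioc_subset_Ioi_self fun s hs => ?_
        have : R < s := by
          by_contra hle
          exact hs.2 ⟨hs.1, not_lt.mp hle⟩
        simp [hvan s this]

/-- Passage from the speed `s` to the energy `E = m s² / 2 + u`. -/
lemma radial_substitution {σ₁ Ψ : ℝ → ℝ} (h₁ : Continuous σ₁) (hΨ : Continuous Ψ) {m u E₀ : ℝ}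
    (hm : 0 < m) (hu : u < E₀) :
    ∫ s in (0:ℝ)..√(2 * (E₀ - u) / m), s * (σ₁ ((1/2) * m * s ^ 2 + u) * Ψ s)
      = (1 / m) * ∫ E in u..E₀, σ₁ E * Ψ (√(2 * (E - u) / m)) := by
  have hsub := intervalIntegral.integral_comp_mul_deriv (a := 0) (b := √(2 * (E₀ - u) / m))
    (f := fun s => (1/2) * m * s ^ 2 + u) (f' := fun s => m * s)
    (g := fun E => σ₁ E * Ψ (√(2 * (E - u) / m)))
    (fun s _ =>
      (((hasDerivAt_pow 2 s).const_mul ((1/2) * m)).add_const u).congr_deriv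
        (by push_cast; ring))
    (by fun_prop) (by fun_prop)
  have hE : (1/2) * m * √(2 * (E₀ - u) / m) ^ 2 + u = E₀ := by
    rw [Real.sq_sqrt (div_nonneg (by linarith) hm.le)]
    field_simp
    ring
  simp only [hE] at hsub
  rw [show (1/2) * m * (0:ℝ) ^ 2 + u = u by ring] at hsub
  rw [← hsub, ← intervalIntegral.integral_const_mul]
  refine intervalIntegral.integral_congr fun s hs => ?_
  rw [uIcc_of_le (Real.sqrt_nonneg _)] at hs
  have hroot : √(2 * ((1/2) * m * s ^ 2 + u - u) / m) = s := by
    rw [show 2 * ((1/2) * m * s ^ 2 + u - u) / m = s ^ 2 by field_simp; ring, Real.sqrt_sq hs.1]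
  simp only [Function.comp_apply, hroot]
  field_simp

/-- the spatial density induced by the ansatz
`f^α(x,v) = σ₁^α(½ m_α |v|² + α e φ(|x|)) σ₂^α(P^α(x,v))` is given by the density
kernel: `∫ f^α(x,v) dv = g^α(|x|, φ(|x|))`; in particular it depends only on `|x|`. -/
theorem stmt15
    (e c β mminus mplus E₀ : ℝ) (he : 0 < e) (hc : 0 < c) (hβ : 0 < β)
    (hmm : 0 < mminus) (hmp : 0 < mplus) (hE₀ : 0 < E₀)
    (α : ℝ) (hα : α = -1 ∨ α = 1)
    (mα : ℝ) (hmα : mα = if α = 1 then mplus else mminus)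
    (σ₁ σ₂ : ℝ → ℝ)
    (hσ₁C1 : ContDiff ℝ 1 σ₁)
    (hσ₁b : ∃ C : ℝ, ∀ η : ℝ, |σ₁ η| ≤ C ∧ |deriv σ₁ η| ≤ C)
    (hσ₁pos : ∀ η : ℝ, 0 ≤ σ₁ η)
    (hσ₁int : MeasureTheory.Integrable σ₁)
    (hσ₁van : ∀ η : ℝ, E₀ ≤ η → σ₁ η = 0)
    (hσ₂C1 : ContDiff ℝ 1 σ₂)
    (hσ₂b : ∃ C : ℝ, ∀ p : ℝ, |σ₂ p| ≤ C ∧ |deriv σ₂ p| ≤ C)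
    (hσ₂pos : ∀ p : ℝ, 0 ≤ σ₂ p)
    (hσ₂van : ∀ p : ℝ, 0 ≤ p → σ₂ p = 0)
    (φ : ℝ → ℝ) (hφcont : ContinuousOn φ (Set.Ici 0))
    (f : (ℝ × ℝ) × (ℝ × ℝ) → ℝ)
    (hf : ∀ x v : ℝ × ℝ, f (x, v)
      = σ₁ ((1/2) * mα * sqnorm v + α * e * φ (rnorm x))
        * σ₂ ((1/2) * sqnorm x + α * (c * mα / (e * β)) * rdot x (vperp v))) :
    (∀ x : ℝ × ℝ,
      (∫ v : ℝ × ℝ, f (x, v)) = gker e c β E₀ α mα σ₁ σ₂ (rnorm x) (φ (rnorm x))) ∧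
    (∀ x y : ℝ × ℝ, rnorm x = rnorm y →
      (∫ v : ℝ × ℝ, f (x, v)) = ∫ v : ℝ × ℝ, f (y, v)) := by
  have hm : 0 < mα := by
    rw [hmα]
    split_ifs <;> assumption
  have key : ∀ x : ℝ × ℝ,
      (∫ v : ℝ × ℝ, f (x, v)) = gker e c β E₀ α mα σ₁ σ₂ (rnorm x) (φ (rnorm x)) := by
    intro x
    have hsq : ∀ v : ℝ × ℝ, sqnorm v = rnorm v ^ 2 := fun v =>
      (Real.sq_sqrt (add_nonneg (sq_nonneg _) (sq_nonneg _))).symm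
    simp only [hf, gker, show 0 ≤ rnorm x from Real.sqrt_nonneg _, true_and]
    set u := α * e * φ (rnorm x)
    split_ifs with hu
    · have hvan : ∀ s, √(2 * (E₀ - u) / mα) < s → σ₁ ((1/2) * mα * s ^ 2 + u) = 0 := by
        intro s hs
        apply hσ₁van
        have h := (Real.sqrt_lt' ((Real.sqrt_nonneg _).trans_lt hs)).mp hs
        rw [div_lt_iff₀ hm] at h
        linarith
      have h := integral_polar (h := fun s => σ₁ ((1/2) * mα * s ^ 2 + u))
        (by have := hσ₁C1.continuous; fun_prop) hσ₂C1.continuous (Real.sqrt_nonneg _) hvan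
        ((1/2) * rnorm x ^ 2) (α * (c * mα / (e * β))) x
      simp only [hsq]
      rw [h]
      exact radial_substitution hσ₁C1.continuous
        (by have := continuous_angularIntegral hσ₂C1.continuous ((1/2) * rnorm x ^ 2); fun_prop)
        hm hu
    · refine (integral_congr_ae (Eventually.of_forall fun v => ?_)).trans (integral_zero _ _)
      have : 0 ≤ (1/2) * mα * sqnorm v := by rw [hsq]; positivity
      simp only [hσ₁van ((1/2) * mα * sqnorm v + u) (by linarith), zero_mul]
  exact ⟨key, fun x y hxy => by rw [key, key, hxy]⟩
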